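/- arXiv:1410.3154 — 2 statements merged into one kernel-verified Lean document; each statement's English description precedes it below -/
import Mathlib

section
/- Let G be a set of t ≥ 3 nonvertical planes in ℝ³ in general position. Then the number of unordered pairs {f, g} of distinct planes of G that form an edge of the upper envelope of G is at most 3t − 6. -/
/-- A nonvertical plane in `ℝ³`, identified with the coefficient triple `(a, b, c)` of the
affine function `f(x,y) = a*x + b*y + c` whose graph it is. -/
abbrev Plane : Type := ℝ × ℝ × ℝ

/-- Evaluation of the affine function with coefficients `f = (a,b,c)` at `p ∈ ℝ²`. -/
def peval (f : Plane) (p : ℝ × ℝ) : ℝ := f.1 * p.1 + f.2.1 * p.2 + f.2.2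

/-- A finite set of nonvertical planes is in general position if any two of them intersect in
a line (equivalently, their linear parts differ), any three of them intersect in exactly one
point, and no four of them have a common point. -/
def PlanesGenPos (G : Finset Plane) : Prop :=
  (∀ f ∈ G, ∀ g ∈ G, f ≠ g → (f.1, f.2.1) ≠ (g.1, g.2.1)) ∧
  (∀ f ∈ G, ∀ g ∈ G, ∀ h ∈ G, f ≠ g → f ≠ h → g ≠ h →
    ∃! p : ℝ × ℝ, peval f p = peval g p ∧ peval g p = peval h p) ∧
  (∀ f ∈ G, ∀ g ∈ G, ∀ h ∈ G, ∀ i ∈ G,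
    f ≠ g → f ≠ h → f ≠ i → g ≠ h → g ≠ i → h ≠ i →
    ¬ ∃ p : ℝ × ℝ, peval f p = peval g p ∧ peval g p = peval h p ∧ peval h p = peval i p)

/-!
After a shear, no two planes meeting at a point of the envelope have the same slope along the
vertical lines `x = const`. Sweep such a line to the right over a strip `L ≤ x < R` in which every
edge has a point, and look at the left end of an edge `{f, g}`, the slope of `f` being smaller
than that of `g`.

* If a third face meets the edge there, it belongs to the plane of middle slope either to disappear
  (`f < h < g`) or to appear (`h < f < g` or `f < g < h`).
* Otherwise the edge enters the strip through the line `x = L`.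

So every plane pays for at most three edges: the one below it and the one above it where its face
appears, and the one that remains where its face disappears. A plane of extreme slope neither
appears nor disappears between two others, and the one of least slope never has an edge below it,
which saves five. Finally, were every plane other than the two extreme ones to appear and disappear
within the strip, the intersection line of the two extreme planes would lie on the envelope at both
ends of the strip, hence throughout, leaving no room for such a plane; this saves the sixth.
-/

/-- The rate of growth of an affine function along the lines `x = const`, which are the sweep
lines of the argument. -/
def Plane.ySlope (f : Plane) : ℝ := f.2.1

/-- The point with first coordinate `x` at which `f` and `g` agree, for `f` and `g` with different
`ySlope`s. As `x` varies it traces the projection of the intersection line of `f` and `g`. If the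
`ySlope`s are equal, the second coordinate is the junk value `0`. -/
noncomputable def crossing (f g : Plane) (x : ℝ) : ℝ × ℝ :=
  (x, -((g.1 - f.1) * x + (g.2.2 - f.2.2)) / (g.ySlope - f.ySlope))

/-- The face of the member `f` in the upper envelope of the finite family `F` restricted to `G`,
projected to `ℝ²`. It is empty for `f ∉ G`. -/
def face {ι : Type*} (F : ι → Plane) (G : Finset ι) (f : ι) : Set (ℝ × ℝ) :=
  {p | f ∈ G ∧ ∀ h ∈ G, peval (F h) p ≤ peval (F f) p}

/-- The edges of the upper envelope, as pairs ordered by increasing `ySlope`. -/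
noncomputable def edges {ι : Type*} (F : ι → Plane) (G : Finset ι) : Finset (ι × ι) :=
  open Classical in
  {e ∈ G ×ˢ G | (F e.1).ySlope < (F e.2).ySlope ∧ (face F G e.1 ∩ face F G e.2).Nonempty}

/-- A vertex of the upper envelope, with three of its faces listed by increasing `ySlope`. -/
structure IsVertex {ι : Type*} (F : ι → Plane) (G : Finset ι) (f m k : ι) (p : ℝ × ℝ) : Prop where
  lower_lt : (F f).ySlope < (F m).ySlope
  lt_upper : (F m).ySlope < (F k).ySlope
  mem_lower : p ∈ face F G f
  mem_middle : p ∈ face F G m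
  mem_upper : p ∈ face F G k

/-- `p` is a point of the face of `m` at which the sweep, started at `x = L`, first meets it. -/
structure IsLeftmost {ι : Type*} (F : ι → Plane) (G : Finset ι) (L : ℝ) (m : ι) (p : ℝ × ℝ) :
    Prop where
  mem : p ∈ face F G m
  le_fst : L ≤ p.1
  fst_le : ∀ q ∈ face F G m, L ≤ q.1 → p.1 ≤ q.1

/-- When the sweep started at `x = L` first meets the face of `g`, the lowest face there is that
of `f`. -/
def IsLowestAtStart {ι : Type*} (F : ι → Plane) (G : Finset ι) (L : ℝ) (f g : ι) : Prop :=
  (F f).ySlope < (F g).ySlope ∧ ∃ p, IsLeftmost F G L g p ∧ p ∈ face F G f ∧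
    ∀ h, p ∈ face F G h → (F f).ySlope ≤ (F h).ySlope

/-- The sweep started at `x = L` first meets the face of `m` at a vertex where it appears between
the faces of `f` and `k`. The vertex may lie on the line `x = L`. -/
def IsBirth {ι : Type*} (F : ι → Plane) (G : Finset ι) (L : ℝ) (f m k : ι) : Prop :=
  ∃ p, IsVertex F G f m k p ∧ IsLeftmost F G L m p

/-- Within the strip `L < x < R`, the face of `m` ends at a vertex where it disappears between the
faces of `f` and `k`. -/
def IsDeath {ι : Type*} (F : ι → Plane) (G : Finset ι) (L R : ℝ) (f m k : ι) : Prop :=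
  ∃ p, IsVertex F G f m k p ∧ (∀ q ∈ face F G m, q.1 ≤ p.1) ∧ L < p.1 ∧ p.1 < R

section AffineFunctions

variable {ι : Type*} {s : Finset ι} {α β : ι → ℝ} {L x₁ : ℝ}

lemma forall_nonpos_or_exists_last_root (hL : L ≤ x₁) (h₁ : ∀ i ∈ s, α i * x₁ + β i ≤ 0) :
    (∀ i ∈ s, α i * L + β i ≤ 0) ∨
      ∃ i ∈ s, α i < 0 ∧ ∃ x₀, L < x₀ ∧ x₀ ≤ x₁ ∧ α i * x₀ + β i = 0 ∧
        ∀ j ∈ s, α j * x₀ + β j ≤ 0 := by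
  by_cases hpos : ∀ i ∈ s, α i * L + β i ≤ 0
  · exact .inl hpos
  right
  push Not at hpos
  obtain ⟨i₀, hi₀, hpos⟩ := hpos
  have decreasing {i} (hi : i ∈ s) (hiL : 0 < α i * L + β i) : α i < 0 := by
    nlinarith [h₁ i hi]
  classical
  obtain ⟨i, hi, hmax⟩ := Finset.exists_max_image {i ∈ s | 0 < α i * L + β i}
    (fun i => -β i / α i) ⟨i₀, Finset.mem_filter.2 ⟨hi₀, hpos⟩⟩
  simp only [Finset.mem_filter] at hi hmax
  have hα := decreasing hi.1 hi.2
  have hroot : α i * (-β i / α i) + β i = 0 := by rw [mul_div_cancel₀ _ hα.ne]; ring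
  set x₀ := -β i / α i
  have hLx₀ : L < x₀ := by nlinarith
  have hx₀₁ : x₀ ≤ x₁ := by nlinarith [h₁ i hi.1]
  refine ⟨i, hi.1, hα, x₀, hLx₀, hx₀₁, hroot, fun j hj => ?_⟩
  by_cases hjL : 0 < α j * L + β j
  · have hle := hmax j ⟨hj, hjL⟩
    rw [div_le_iff_of_neg (decreasing hj hjL)] at hle
    linarith
  · -- Nonpositive at both `L` and `x₁`, hence in between.
    nlinarith [h₁ j hj]

end AffineFunctions

section Planes

variable {f g : Plane} {p q : ℝ × ℝ}

lemma peval_eq_add_ySlope_mul (hpq : p.1 = q.1) :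
    peval f p = peval f q + f.ySlope * (p.2 - q.2) := by
  simp only [peval, Plane.ySlope, hpq]
  ring

lemma crossing_fst (f g : Plane) (x : ℝ) : (crossing f g x).1 = x := rfl

lemma peval_sub_peval (h : f.ySlope ≠ g.ySlope) :
    peval g p - peval f p = (g.ySlope - f.ySlope) * (p.2 - (crossing f g p.1).2) := by
  have : g.ySlope - f.ySlope ≠ 0 := sub_ne_zero.2 h.symm
  rw [crossing, mul_sub, mul_div_cancel₀ _ this]
  simp only [peval, Plane.ySlope]
  ring

lemma peval_crossing (h : f.ySlope ≠ g.ySlope) (x : ℝ) :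
    peval f (crossing f g x) = peval g (crossing f g x) := by
  have := peval_sub_peval (p := crossing f g x) h
  rw [crossing_fst, sub_self, mul_zero] at this
  exact (sub_eq_zero.1 this).symm

lemma crossing_fst_eq_self (h : f.ySlope ≠ g.ySlope) (hp : peval f p = peval g p) :
    crossing f g p.1 = p := by
  have := peval_sub_peval (p := p) h
  rw [hp, sub_self, eq_comm, mul_eq_zero, or_iff_right (sub_ne_zero.2 h.symm)] at this
  exact Prod.ext rfl (sub_eq_zero.1 this).symm

lemma exists_peval_sub_peval_crossing (f g h : Plane) :
    ∃ α β : ℝ, ∀ x, peval h (crossing f g x) - peval f (crossing f g x) = α * x + β := by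
  refine ⟨(h.1 - f.1) - (h.2.1 - f.2.1) * (g.1 - f.1) / (g.ySlope - f.ySlope),
    (h.2.2 - f.2.2) - (h.2.1 - f.2.1) * (g.2.2 - f.2.2) / (g.ySlope - f.ySlope), fun x => ?_⟩
  simp only [peval, crossing]
  ring

end Planes

section Faces

variable {ι : Type*} {F : ι → Plane} {G : Finset ι} {f g h k m : ι} {p q : ℝ × ℝ}

lemma peval_eq_of_mem_face (hf : p ∈ face F G f) (hg : p ∈ face F G g) :
    peval (F f) p = peval (F g) p :=
  le_antisymm (hg.2 f hf.1) (hf.2 g hg.1)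

lemma mem_face_of_peval_le (hf : p ∈ face F G f) (hg : g ∈ G)
    (hle : peval (F f) p ≤ peval (F g) p) : p ∈ face F G g :=
  ⟨hg, fun h hh => (hf.2 h hh).trans hle⟩

lemma exists_mem_face (hG : G.Nonempty) (p : ℝ × ℝ) : ∃ f, p ∈ face F G f :=
  (G.exists_max_image (fun f => peval (F f) p) hG).imp fun _ hf => hf

lemma mem_edges {e : ι × ι} :
    e ∈ edges F G ↔
      (F e.1).ySlope < (F e.2).ySlope ∧ (face F G e.1 ∩ face F G e.2).Nonempty := by
  simp only [edges, Finset.mem_filter, Finset.mem_product, and_iff_right_iff_imp]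
  rintro ⟨-, p, h₁, h₂⟩
  exact ⟨h₁.1, h₂.1⟩

lemma le_snd_of_mem_face (hp : p ∈ face F G m) (hf : f ∈ G) (hfm : (F f).ySlope < (F m).ySlope)
    (hpq : p.1 = q.1) (hq : peval (F m) q ≤ peval (F f) q) : q.2 ≤ p.2 := by
  have := hp.2 f hf
  rw [peval_eq_add_ySlope_mul hpq, peval_eq_add_ySlope_mul (f := F m) hpq] at this
  nlinarith

lemma snd_le_of_mem_face (hp : p ∈ face F G m) (hk : k ∈ G) (hmk : (F m).ySlope < (F k).ySlope)
    (hpq : p.1 = q.1) (hq : peval (F m) q ≤ peval (F k) q) : p.2 ≤ q.2 := by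
  have := hp.2 k hk
  rw [peval_eq_add_ySlope_mul hpq, peval_eq_add_ySlope_mul (f := F m) hpq] at this
  nlinarith

lemma eq_of_mem_face_of_squeezed (hp : p ∈ face F G m) (hf : f ∈ G) (hk : k ∈ G)
    (hfm : (F f).ySlope < (F m).ySlope) (hmk : (F m).ySlope < (F k).ySlope) (hpq : p.1 = q.1)
    (hqf : peval (F m) q ≤ peval (F f) q) (hqk : peval (F m) q ≤ peval (F k) q) : p = q :=
  Prod.ext hpq <| le_antisymm (snd_le_of_mem_face hp hk hmk hpq hqk)
    (le_snd_of_mem_face hp hf hfm hpq hqf)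

lemma mem_face_of_squeezed (hp : p ∈ face F G m) (hf : f ∈ G) (hk : k ∈ G)
    (hfm : (F f).ySlope < (F m).ySlope) (hmk : (F m).ySlope < (F k).ySlope) (hpq : p.1 = q.1)
    (hqf : peval (F m) q ≤ peval (F f) q) (hqk : peval (F m) q ≤ peval (F k) q) :
    q ∈ face F G m :=
  eq_of_mem_face_of_squeezed hp hf hk hfm hmk hpq hqf hqk ▸ hp

lemma IsVertex.eq_of_mem_face (hq : IsVertex F G f m k q) (hp : p ∈ face F G m)
    (hpq : p.1 = q.1) : p = q :=
  eq_of_mem_face_of_squeezed hp hq.mem_lower.1 hq.mem_upper.1 hq.lower_lt hq.lt_upper hpq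
    (peval_eq_of_mem_face hq.mem_middle hq.mem_lower).le
    (peval_eq_of_mem_face hq.mem_middle hq.mem_upper).le

lemma IsVertex.face_eq_or (h₃ : {j | p ∈ face F G j}.ncard ≤ 3) (hp : IsVertex F G f m k p)
    (hj : p ∈ face F G h) : h = f ∨ h = m ∨ h = k := by
  have hfin : {j | p ∈ face F G j}.Finite := G.finite_toSet.subset fun j hj => hj.1
  have hsub : {f, m, k} ⊆ {j | p ∈ face F G j} := by
    rintro j (rfl | rfl | rfl)
    exacts [hp.mem_lower, hp.mem_middle, hp.mem_upper]
  have ne_of_ySlope {i j} : (F i).ySlope ≠ (F j).ySlope → i ≠ j :=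
    ne_of_apply_ne fun j => (F j).ySlope
  have hcard : ({f, m, k} : Set ι).ncard = 3 :=
    Set.ncard_eq_three.2 ⟨f, m, k, ne_of_ySlope hp.lower_lt.ne,
      ne_of_ySlope (hp.lower_lt.trans hp.lt_upper).ne, ne_of_ySlope hp.lt_upper.ne, rfl⟩
  have := Set.eq_of_subset_of_ncard_le hsub (h₃.trans hcard.ge) hfin
  exact this.symm.subset hj

lemma IsVertex.ends_eq {f' k' : ι} (h₃ : {j | p ∈ face F G j}.ncard ≤ 3)
    (hp : IsVertex F G f m k p) (hp' : IsVertex F G f' m k' p) : f = f' ∧ k = k' := by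
  constructor
  · rcases hp'.face_eq_or h₃ hp.mem_lower with rfl | rfl | rfl
    exacts [rfl, (hp.lower_lt.false).elim, (hp.lower_lt.asymm hp'.lt_upper).elim]
  · rcases hp'.face_eq_or h₃ hp.mem_upper with rfl | rfl | rfl
    exacts [(hp.lt_upper.asymm hp'.lower_lt).elim, (hp.lt_upper.false).elim, rfl]

end Faces

section Charging

variable {ι : Type*} {F : ι → Plane} {G : Finset ι} {f f' g h k k' m : ι} {p q : ℝ × ℝ}
  {L R : ℝ}

lemma IsLeftmost.fst_eq (hp : IsLeftmost F G L m p) (hq : IsLeftmost F G L m q) : p.1 = q.1 :=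
  le_antisymm (hp.fst_le q hq.mem hq.le_fst) (hq.fst_le p hp.mem hp.le_fst)

lemma IsLowestAtStart.unique (hinj : ∀ p, {j | p ∈ face F G j}.InjOn fun j => (F j).ySlope)
    (hf : IsLowestAtStart F G L f g) (hf' : IsLowestAtStart F G L f' g) : f = f' := by
  obtain ⟨hlt, p, hp, hpf, hmin⟩ := hf
  obtain ⟨hlt', p', hp', hpf', hmin'⟩ := hf'
  have hfst := hp.fst_eq hp'
  have hsnd : p.2 = p'.2 := le_antisymm
    (le_snd_of_mem_face hp'.mem hpf.1 hlt hfst.symm (peval_eq_of_mem_face hp.mem hpf).le)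
    (le_snd_of_mem_face hp.mem hpf'.1 hlt' hfst (peval_eq_of_mem_face hp'.mem hpf').le)
  obtain rfl : p = p' := Prod.ext hfst hsnd
  exact hinj p hpf hpf' (le_antisymm (hmin f' hpf') (hmin' f hpf))

lemma IsBirth.unique (h₃ : ∀ p, {j | p ∈ face F G j}.ncard ≤ 3) (hm : IsBirth F G L f m k)
    (hm' : IsBirth F G L f' m k') : f = f' ∧ k = k' := by
  obtain ⟨p, hv, hp⟩ := hm
  obtain ⟨p', hv', hp'⟩ := hm'
  obtain rfl := hv'.eq_of_mem_face hv.mem_middle (hp.fst_eq hp')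
  exact hv.ends_eq (h₃ p) hv'

lemma IsDeath.unique (h₃ : ∀ p, {j | p ∈ face F G j}.ncard ≤ 3) (hm : IsDeath F G L R f m k)
    (hm' : IsDeath F G L R f' m k') : f = f' ∧ k = k' := by
  obtain ⟨p, hv, hp, -⟩ := hm
  obtain ⟨p', hv', hp', -⟩ := hm'
  obtain rfl := hv'.eq_of_mem_face hv.mem_middle
    (le_antisymm (hp' p hv.mem_middle) (hp p' hv'.mem_middle))
  exact hv.ends_eq (h₃ p) hv'

lemma exists_left_end (hfg : (F f).ySlope < (F g).ySlope) (hf : p ∈ face F G f)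
    (hg : p ∈ face F G g) (hL : L ≤ p.1) :
    (∃ q ∈ face F G f ∩ face F G g, q.1 = L) ∨
      ∃ h, ∃ q ∈ face F G f ∩ face F G g, q ∈ face F G h ∧ L < q.1 ∧ q.1 ≤ p.1 ∧
        (∀ x < q.1, peval (F f) (crossing (F f) (F g) x) <
          peval (F h) (crossing (F f) (F g) x)) ∧
        ∀ x > q.1, peval (F h) (crossing (F f) (F g) x) <
          peval (F f) (crossing (F f) (F g) x) := by
  choose α β hαβ using fun j => exists_peval_sub_peval_crossing (F f) (F g) (F j)
  have mem_faces {x} (hx : ∀ j ∈ G, α j * x + β j ≤ 0) :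
      crossing (F f) (F g) x ∈ face F G f ∩ face F G g := by
    have hxf : crossing (F f) (F g) x ∈ face F G f :=
      ⟨hf.1, fun j hj => by linarith [hx j hj, hαβ j x]⟩
    exact ⟨hxf, mem_face_of_peval_le hxf hg.1 (peval_crossing hfg.ne x).le⟩
  have hp (j) (hj : j ∈ G) : α j * p.1 + β j ≤ 0 := by
    rw [← hαβ, crossing_fst_eq_self hfg.ne (peval_eq_of_mem_face hf hg)]
    exact sub_nonpos.2 (hf.2 j hj)
  rcases forall_nonpos_or_exists_last_root hL hp with hL' | ⟨h, hh, hα, x, hLx, hxp, hroot, hx⟩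
  · exact .inl ⟨_, mem_faces hL', rfl⟩
  · have hq := mem_faces hx
    refine .inr ⟨h, _, hq, mem_face_of_peval_le hq.1 hh ?_, hLx, hxp, fun z hz => ?_,
      fun z hz => ?_⟩
    · linarith [hαβ h x]
    · rw [crossing_fst] at hz
      nlinarith [hαβ h z]
    · rw [crossing_fst] at hz
      nlinarith [hαβ h z]

lemma isLowestAtStart_or_isBirth_of_fst_eq (hfg : (F f).ySlope < (F g).ySlope)
    (hf : p ∈ face F G f) (hg : p ∈ face F G g) :
    IsLowestAtStart F G p.1 f g ∨ ∃ h, IsBirth F G p.1 h f g := by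
  by_cases hlow : ∀ h, p ∈ face F G h → (F f).ySlope ≤ (F h).ySlope
  · exact .inl ⟨hfg, p, ⟨hg, le_rfl, fun _ _ => id⟩, hf, hlow⟩
  · push Not at hlow
    obtain ⟨h, hh, hhf⟩ := hlow
    exact .inr ⟨h, p, ⟨hhf, hfg, hh, hf, hg⟩, ⟨hf, le_rfl, fun _ _ => id⟩⟩

lemma isLowestAtStart_or_isBirth_or_isDeath
    (hinj : ∀ p, {j | p ∈ face F G j}.InjOn fun j => (F j).ySlope)
    (h₃ : ∀ p, {j | p ∈ face F G j}.ncard ≤ 3) (hfg : (F f).ySlope < (F g).ySlope)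
    (hf : p ∈ face F G f) (hg : p ∈ face F G g) (hL : L ≤ p.1) (hR : p.1 < R) :
    IsLowestAtStart F G L f g ∨ (∃ h, IsBirth F G L h f g) ∨ ∃ h, IsDeath F G L R f h g := by
  rcases exists_left_end hfg hf hg hL with
    ⟨q, hq, rfl⟩ | ⟨h, q, ⟨hqf, hqg⟩, hqh, hLq, hqp, hbefore, hafter⟩
  · exact (isLowestAtStart_or_isBirth_of_fst_eq hfg hq.1 hq.2).imp_right .inl
  have hcross := peval_crossing hfg.ne
  have ySlope_ne {j} (hqj : q ∈ face F G j)
      (hj : ∀ x, peval (F f) (crossing (F f) (F g) x) = peval (F j) (crossing (F f) (F g) x)) :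
      (F h).ySlope ≠ (F j).ySlope := fun heq => by
    obtain rfl := hinj q hqh hqj heq
    exact (hbefore (q.1 - 1) (by linarith)).ne (hj _)
  rcases (ySlope_ne hqf fun _ => rfl).lt_or_gt with hhf | hfh
  · refine .inr (.inl ⟨h, q, ⟨hhf, hfg, hqh, hqf, hqg⟩, hqf, hLq.le, fun r hr _ => ?_⟩)
    by_contra! hrq
    have hc := mem_face_of_squeezed hr hqh.1 hqg.1 hhf hfg (crossing_fst ..).symm
      (hbefore r.1 hrq).le (hcross r.1).le
    exact (hbefore r.1 hrq).not_ge (hc.2 h hqh.1)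
  rcases (ySlope_ne hqg hcross).lt_or_gt with hhg | hgh
  · refine .inr (.inr ⟨h, q, ⟨hfh, hhg, hqf, hqh, hqg⟩, fun r hr => ?_, hLq, hqp.trans_lt hR⟩)
    by_contra! hqr
    have hc := mem_face_of_squeezed hr hqf.1 hqg.1 hfh hhg (crossing_fst ..).symm
      (hafter r.1 hqr).le ((hafter r.1 hqr).le.trans (hcross r.1).le)
    exact (hafter r.1 hqr).not_ge (hc.2 f hqf.1)
  · have hv : IsVertex F G f g h q := ⟨hfg, hgh, hqf, hqg, hqh⟩
    refine .inl ⟨hfg, q, ⟨hqg, hLq.le, fun r hr _ => ?_⟩, hqf, fun j hj => ?_⟩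
    · by_contra! hrq
      have hgh' := (hcross r.1).ge.trans_lt (hbefore r.1 hrq)
      have hc := mem_face_of_squeezed hr hqf.1 hqh.1 hfg hgh (crossing_fst ..).symm
        (hcross r.1).ge hgh'.le
      exact hgh'.not_ge (hc.2 h hqh.1)
    · rcases hv.face_eq_or (h₃ q) hj with rfl | rfl | rfl
      exacts [le_rfl, hfg.le, (hfg.trans hgh).le]

end Charging

section ExtremePlanes

variable {ι : Type*} {F : ι → Plane} {G : Finset ι} {f f' g k' m : ι} {L R : ℝ}

lemma IsVertex.middle_ne {p : ℝ × ℝ} (hmin : ∀ j ∈ G, (F f).ySlope ≤ (F j).ySlope)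
    (hmax : ∀ j ∈ G, (F j).ySlope ≤ (F g).ySlope) (hv : IsVertex F G f' m k' p) :
    m ≠ f ∧ m ≠ g := by
  constructor <;> rintro rfl
  · exact (hmin f' hv.mem_lower.1).not_gt hv.lower_lt
  · exact (hmax k' hv.mem_upper.1).not_gt hv.lt_upper

lemma crossing_mem_face_of_forall_isBirth (hf : f ∈ G) (hfg : (F f).ySlope < (F g).ySlope)
    (hbirth : ∀ m ∈ G, m ≠ f → m ≠ g → ∃ f' k', IsBirth F G L f' m k') :
    crossing (F f) (F g) L ∈ face F G f := by
  set q := crossing (F f) (F g) L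
  obtain ⟨m₀, hm₀⟩ := exists_mem_face (F := F) ⟨f, hf⟩ q
  classical
  obtain ⟨m, hm, hlow⟩ := Finset.exists_min_image {m ∈ G | q ∈ face F G m}
    (fun m => (F m).ySlope) ⟨m₀, Finset.mem_filter.2 ⟨hm₀.1, hm₀⟩⟩
  simp only [Finset.mem_filter] at hm hlow
  by_cases hmf : m = f
  · exact hmf ▸ hm.2
  by_cases hmg : m = g
  · exact mem_face_of_peval_le (hmg ▸ hm.2) hf (peval_crossing hfg.ne L).ge
  -- A face met already on the line `x = L` can only appear there, and then not as the lowest one.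
  obtain ⟨f', k', p, hv, hp⟩ := hbirth m hm.1 hmf hmg
  have hpL : q.1 = p.1 := le_antisymm hp.le_fst (hp.fst_le q hm.2 le_rfl)
  have hqp := hv.eq_of_mem_face hm.2 hpL
  exact absurd hv.lower_lt (hlow f' ⟨hv.mem_lower.1, hqp ▸ hv.mem_lower⟩).not_gt

lemma crossing_mem_face_of_forall_isDeath (hf : f ∈ G) (hfg : (F f).ySlope < (F g).ySlope)
    (hdeath : ∀ m ∈ G, m ≠ f → m ≠ g → ∃ f' k', IsDeath F G L R f' m k') :
    crossing (F f) (F g) R ∈ face F G f := by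
  obtain ⟨m, hm⟩ := exists_mem_face (F := F) ⟨f, hf⟩ (crossing (F f) (F g) R)
  by_cases hmf : m = f
  · exact hmf ▸ hm
  by_cases hmg : m = g
  · exact mem_face_of_peval_le (hmg ▸ hm) hf (peval_crossing hfg.ne R).ge
  obtain ⟨f', k', p, -, hlast, -, hpR⟩ := hdeath m hm.1 hmf hmg
  exact absurd hpR (hlast _ hm).not_gt

lemma not_isDeath_of_crossing_mem_face (hg : g ∈ G)
    (hmin : ∀ j ∈ G, (F f).ySlope ≤ (F j).ySlope) (hmax : ∀ j ∈ G, (F j).ySlope ≤ (F g).ySlope)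
    (hL : crossing (F f) (F g) L ∈ face F G f) (hR : crossing (F f) (F g) R ∈ face F G f) :
    ¬ IsDeath F G L R f' m k' := by
  rintro ⟨p, hv, hlast, hLp, hpR⟩
  have hfm := (hmin f' hv.mem_lower.1).trans_lt hv.lower_lt
  have hmg := hv.lt_upper.trans_le (hmax k' hv.mem_upper.1)
  have hm := hv.mem_middle.1
  have hcross := peval_crossing (hfm.trans hmg).ne
  obtain ⟨α, β, hαβ⟩ := exists_peval_sub_peval_crossing (F f) (F g) (F m)
  have hL' : α * L + β ≤ 0 := by linarith [hαβ L, hL.2 m hm]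
  have hR' : α * R + β ≤ 0 := by linarith [hαβ R, hR.2 m hm]
  have hp' : α * p.1 + β ≤ 0 := by nlinarith
  -- The vertex is squeezed onto the line where `f` and `g` agree, so `m` touches that line in an
  -- interior point of the strip without exceeding it at the ends. Hence `m` contains the line.
  have hc : crossing (F f) (F g) p.1 ∈ face F G m :=
    mem_face_of_squeezed hv.mem_middle hL.1 hg hfm hmg (crossing_fst ..).symm
      (by linarith [hαβ p.1]) (by linarith [hαβ p.1, hcross p.1])
  have hp₀ : α * p.1 + β = 0 := le_antisymm hp' (by linarith [hαβ p.1, hc.2 f hL.1])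
  have hα : α = 0 := by nlinarith
  have hmR : crossing (F f) (F g) R ∈ face F G m :=
    mem_face_of_peval_le hR hm (by rw [hα] at hαβ hp₀; linarith [hαβ R])
  exact (hlast _ hmR).not_gt hpR

lemma exists_not_isBirth_or_not_isDeath (hG : 3 ≤ G.card) (hf : f ∈ G) (hg : g ∈ G)
    (hmin : ∀ j ∈ G, (F f).ySlope ≤ (F j).ySlope) (hmax : ∀ j ∈ G, (F j).ySlope ≤ (F g).ySlope)
    (hfg : (F f).ySlope < (F g).ySlope) :
    ∃ m ∈ G, m ≠ f ∧ m ≠ g ∧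
      ((¬ ∃ f' k', IsBirth F G L f' m k') ∨ ¬ ∃ f' k', IsDeath F G L R f' m k') := by
  by_contra! hall
  have hL := crossing_mem_face_of_forall_isBirth hf hfg fun m hm hmf hmg => (hall m hm hmf hmg).1
  have hR := crossing_mem_face_of_forall_isDeath hf hfg fun m hm hmf hmg => (hall m hm hmf hmg).2
  classical
  obtain ⟨m, hm, hmfg⟩ := Finset.exists_mem_notMem_of_card_lt_card
    (Finset.card_le_two.trans_lt hG : ({f, g} : Finset ι).card < G.card)
  obtain ⟨hmf, hmg⟩ : m ≠ f ∧ m ≠ g := by simpa using hmfg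
  obtain ⟨-, f', k', hdeath⟩ := hall m hm hmf hmg
  exact not_isDeath_of_crossing_mem_face hg hmin hmax hL hR hdeath

end ExtremePlanes

section Counting

variable {ι : Type*} {F : ι → Plane} {G : Finset ι} {f g : ι} {L R : ℝ}

open Classical in
lemma card_filter_isLowestAtStart_le
    (hinj : ∀ p, {j | p ∈ face F G j}.InjOn fun j => (F j).ySlope)
    (hf : f ∈ G) (hmin : ∀ j ∈ G, (F f).ySlope ≤ (F j).ySlope) :
    {e ∈ edges F G | IsLowestAtStart F G L e.1 e.2}.card ≤ G.card - 1 := by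
  rw [← Finset.card_erase_of_mem hf]
  refine Finset.card_le_card_of_injOn Prod.snd ?_ ?_
  · intro e he
    obtain ⟨-, hlt, p, hp, hpe, -⟩ := Finset.mem_filter.1 he
    refine Finset.mem_erase.2 ⟨?_, hp.mem.1⟩
    rintro rfl
    exact (hmin _ hpe.1).not_gt hlt
  · intro e he e' he' heq
    have hlow := (Finset.mem_filter.1 he).2
    have hlow' := (Finset.mem_filter.1 he').2
    rw [← heq] at hlow'
    exact Prod.ext (hlow.unique hinj hlow') heq

open Classical in
lemma card_filter_isBirth_le (h₃ : ∀ p, {j | p ∈ face F G j}.ncard ≤ 3) :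
    {e ∈ edges F G | ∃ h, IsBirth F G L h e.1 e.2}.card ≤
      {m ∈ G | ∃ f k, IsBirth F G L f m k}.card := by
  refine Finset.card_le_card_of_injOn Prod.fst ?_ ?_
  · intro e he
    obtain ⟨-, h, p, hp⟩ := Finset.mem_filter.1 he
    exact Finset.mem_filter.2 ⟨hp.2.mem.1, h, e.2, p, hp⟩
  · intro e he e' he' heq
    obtain ⟨-, h, hbirth⟩ := Finset.mem_filter.1 he
    obtain ⟨-, h', hbirth'⟩ := Finset.mem_filter.1 he'
    rw [← heq] at hbirth'
    exact Prod.ext heq (hbirth.unique h₃ hbirth').2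

open Classical in
lemma card_filter_isDeath_le (h₃ : ∀ p, {j | p ∈ face F G j}.ncard ≤ 3) :
    {e ∈ edges F G | ∃ h, IsDeath F G L R e.1 h e.2}.card ≤
      {m ∈ G | ∃ f k, IsDeath F G L R f m k}.card := by
  refine Finset.card_le_card_of_forall_subsingleton (fun e m => IsDeath F G L R e.1 m e.2) ?_ ?_
  · intro e he
    obtain ⟨-, h, hdeath⟩ := Finset.mem_filter.1 he
    have hh : h ∈ G := by
      obtain ⟨p, hp, -⟩ := hdeath
      exact hp.mem_middle.1
    exact ⟨h, Finset.mem_filter.2 ⟨hh, e.1, e.2, hdeath⟩, hdeath⟩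
  · intro m _ e he e' he'
    exact Prod.ext_iff.2 (he.2.unique h₃ he'.2)

lemma exists_strip (F : ι → Plane) (G : Finset ι) :
    ∃ L R : ℝ, ∀ e ∈ edges F G, ∃ p ∈ face F G e.1 ∩ face F G e.2, L ≤ p.1 ∧ p.1 < R := by
  choose! w hw using fun e (he : e ∈ edges F G) => (mem_edges.1 he).2
  obtain ⟨L, hL⟩ := ((edges F G).image fun e => (w e).1).bddBelow
  obtain ⟨R, hR⟩ := ((edges F G).image fun e => (w e).1).bddAbove
  refine ⟨L, R + 1, fun e he => ⟨w e, hw e he, ?_⟩⟩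
  have he' : (w e).1 ∈ (edges F G).image fun e => (w e).1 := Finset.mem_image_of_mem _ he
  exact ⟨hL he', (hR he').trans_lt (lt_add_one R)⟩

open Classical in
lemma card_births_add_card_deaths_add_five_le (hG : 3 ≤ G.card) (hf : f ∈ G) (hg : g ∈ G)
    (hmin : ∀ j ∈ G, (F f).ySlope ≤ (F j).ySlope) (hmax : ∀ j ∈ G, (F j).ySlope ≤ (F g).ySlope)
    (hfg : (F f).ySlope < (F g).ySlope) :
    {m ∈ G | ∃ f' k', IsBirth F G L f' m k'}.card +
      {m ∈ G | ∃ f' k', IsDeath F G L R f' m k'}.card + 5 ≤ 2 * G.card := by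
  set births := {m ∈ G | ∃ f' k', IsBirth F G L f' m k'}
  set deaths := {m ∈ G | ∃ f' k', IsDeath F G L R f' m k'}
  set middle := (G.erase f).erase g
  have hmiddle : middle.card + 2 = G.card := by
    have hgf : g ∈ G.erase f := Finset.mem_erase.2 ⟨fun h => hfg.ne (h ▸ rfl), hg⟩
    have := Finset.card_erase_add_one hgf
    have := Finset.card_erase_add_one hf
    lia
  have mem_middle {m f' k' p} (hv : IsVertex F G f' m k' p) : m ∈ middle := by
    have := hv.middle_ne hmin hmax
    exact Finset.mem_erase.2 ⟨this.2, Finset.mem_erase.2 ⟨this.1, hv.mem_middle.1⟩⟩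
  have hbirths : births ⊆ middle := fun m hm => by
    obtain ⟨-, f', k', p, hv, -⟩ := Finset.mem_filter.1 hm
    exact mem_middle hv
  have hdeaths : deaths ⊆ middle := fun m hm => by
    obtain ⟨-, f', k', p, hv, -⟩ := Finset.mem_filter.1 hm
    exact mem_middle hv
  obtain ⟨m, hm, hmf, hmg, hne⟩ :=
    exists_not_isBirth_or_not_isDeath (L := L) (R := R) hG hf hg hmin hmax hfg
  have hm_middle : m ∈ middle := Finset.mem_erase.2 ⟨hmg, Finset.mem_erase.2 ⟨hmf, hm⟩⟩
  rcases hne with h | h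
  · have := Finset.card_lt_card ⟨hbirths, fun hb => h (Finset.mem_filter.1 (hb hm_middle)).2⟩
    have := Finset.card_le_card hdeaths
    lia
  · have := Finset.card_le_card hbirths
    have := Finset.card_lt_card ⟨hdeaths, fun hd => h (Finset.mem_filter.1 (hd hm_middle)).2⟩
    lia

theorem card_edges_le (hG : 3 ≤ G.card)
    (hinj : ∀ p, {j | p ∈ face F G j}.InjOn fun j => (F j).ySlope)
    (h₃ : ∀ p, {j | p ∈ face F G j}.ncard ≤ 3) : (edges F G).card ≤ 3 * G.card - 6 := by
  classical
  rcases (edges F G).eq_empty_or_nonempty with hE | ⟨e₀, he₀⟩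
  · simp [hE]
  obtain ⟨hlt, p₀, hp₀, hp₀'⟩ := mem_edges.1 he₀
  obtain ⟨f, hf, hmin⟩ := G.exists_min_image (fun j => (F j).ySlope) ⟨_, hp₀.1⟩
  obtain ⟨g, hg, hmax⟩ := G.exists_max_image (fun j => (F j).ySlope) ⟨_, hp₀.1⟩
  have hfg := (hmin _ hp₀.1).trans_lt (hlt.trans_le (hmax _ hp₀'.1))
  obtain ⟨L, R, hLR⟩ := exists_strip F G
  have hcover : edges F G ⊆ {e ∈ edges F G | IsLowestAtStart F G L e.1 e.2} ∪
      ({e ∈ edges F G | ∃ h, IsBirth F G L h e.1 e.2} ∪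
        {e ∈ edges F G | ∃ h, IsDeath F G L R e.1 h e.2}) := fun e he => by
    obtain ⟨p, ⟨hp, hp'⟩, hLp, hpR⟩ := hLR e he
    simp only [Finset.mem_union, Finset.mem_filter, he, true_and]
    exact isLowestAtStart_or_isBirth_or_isDeath hinj h₃ (mem_edges.1 he).1 hp hp' hLp hpR
  have := (Finset.card_le_card hcover).trans <| (Finset.card_union_le _ _).trans <|
    add_le_add_right (Finset.card_union_le _ _) _
  have := card_filter_isLowestAtStart_le (L := L) hinj hf hmin
  have := card_filter_isBirth_le (L := L) h₃
  have := card_filter_isDeath_le (L := L) (R := R) h₃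
  have := card_births_add_card_deaths_add_five_le (L := L) (R := R) hG hf hg hmin hmax hfg
  lia

end Counting

section Shear

/-- The plane `f` in the coordinates `(x - s * y, y)` of `ℝ²`. -/
def shear (s : ℝ) (f : Plane) : Plane := (f.1, f.2.1 + s * f.1, f.2.2)

lemma peval_shear (s : ℝ) (f : Plane) (p : ℝ × ℝ) :
    peval (shear s f) p = peval f (p.1 + s * p.2, p.2) := by
  simp only [peval, shear]
  ring

lemma mem_face_shear {s : ℝ} {G : Finset Plane} {f : Plane} {p : ℝ × ℝ} :
    p ∈ face (shear s) G f ↔ (p.1 + s * p.2, p.2) ∈ face id G f := by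
  simp only [face, peval_shear, id_eq, Set.mem_ofPred_eq]

-- `s` has only to avoid the finitely many values at which two planes with different first
-- coefficients acquire equal `ySlope`s.
lemma exists_shear_injOn (G : Finset Plane) :
    ∃ s, ∀ p, {f | p ∈ face (shear s) G f}.InjOn fun f => (shear s f).ySlope := by
  classical
  obtain ⟨s, hs⟩ := Infinite.exists_notMem_finset
    ((G ×ˢ G).image fun e => -(e.1.2.1 - e.2.2.1) / (e.1.1 - e.2.1))
  refine ⟨s, fun p f hf g hg heq => ?_⟩
  have hval := peval_eq_of_mem_face hf hg
  simp only [Plane.ySlope, shear] at heq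
  have h₁ : f.1 = g.1 := by
    by_contra hne
    refine hs (Finset.mem_image.2 ⟨(f, g), Finset.mk_mem_product hf.1 hg.1, ?_⟩)
    rw [div_eq_iff (sub_ne_zero.2 hne)]
    linarith
  have h₂ : f.2.1 = g.2.1 := by rw [h₁] at heq; exact add_right_cancel heq
  have h₃ : f.2.2 = g.2.2 := by
    simp only [peval, shear, h₁, h₂] at hval
    exact add_left_cancel hval
  exact Prod.ext h₁ (Prod.ext h₂ h₃)

end Shear

lemma PlanesGenPos.ncard_face_le_three {G : Finset Plane} (hG : PlanesGenPos G) (p : ℝ × ℝ) :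
    {f | p ∈ face id G f}.ncard ≤ 3 := by
  by_contra! h
  obtain ⟨i, hi⟩ := Set.nonempty_of_ncard_ne_zero (by lia : {f | p ∈ face id G f}.ncard ≠ 0)
  have h' := Set.ncard_sdiff_singleton_add_one hi (G.finite_toSet.subset fun j hj => hj.1)
  obtain ⟨f, g, k, hf, hg, hk, hfg, hfk, hgk⟩ :=
    (Set.two_lt_ncard_iff (Set.finite_of_ncard_pos (by lia))).1
      (by lia : 2 < ({f | p ∈ face id G f} \ {i}).ncard)
  exact hG.2.2 f hf.1.1 g hg.1.1 k hk.1.1 i hi.1 hfg hfk hf.2 hgk hg.2 hk.2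
    ⟨p, peval_eq_of_mem_face hf.1 hg.1, peval_eq_of_mem_face hg.1 hk.1,
      peval_eq_of_mem_face hk.1 hi⟩

theorem upper_envelope_edge_count_general (G : Finset Plane) (ht : 3 ≤ G.card)
    (h₃ : ∀ p, {f | p ∈ face id G f}.ncard ≤ 3) :
    {e : Sym2 Plane | ∃ f ∈ G, ∃ g ∈ G, f ≠ g ∧ e = s(f, g) ∧
        ∃ p : ℝ × ℝ, peval f p = peval g p ∧ ∀ h ∈ G, peval h p ≤ peval f p}.ncard
      ≤ 3 * G.card - 6 := by
  obtain ⟨s, hs⟩ := exists_shear_injOn G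
  have hle := card_edges_le (F := shear s) ht hs fun p => by
    simpa only [mem_face_shear] using h₃ (p.1 + s * p.2, p.2)
  refine le_trans ?_ hle
  rw [← Set.ncard_coe_finset]
  refine (Set.ncard_le_ncard ?_ (Set.toFinite _)).trans
    (Set.ncard_image_le (f := fun e => s(e.1, e.2)) (Finset.finite_toSet _))
  rintro _ ⟨f, hf, g, hg, hne, rfl, p, heq, hmax⟩
  have mem_face_shear' {h} (hh : p ∈ face id G h) : (p.1 - s * p.2, p.2) ∈ face (shear s) G h :=
    mem_face_shear.2 (by simpa only [sub_add_cancel] using hh)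
  have hpf := mem_face_shear' ⟨hf, hmax⟩
  have hpg := mem_face_shear' (mem_face_of_peval_le ⟨hf, hmax⟩ hg heq.le)
  rcases lt_or_gt_of_ne ((hs _).ne hpf hpg hne) with hlt | hlt
  · exact ⟨(f, g), mem_edges.2 ⟨hlt, _, hpf, hpg⟩, rfl⟩
  · exact ⟨(g, f), mem_edges.2 ⟨hlt, _, hpg, hpf⟩, Sym2.eq_swap⟩

/-- The number of (unordered) pairs of distinct planes of a set `G` of `t ≥ 3` planes in
general position that form an edge of the upper envelope of `G` is at most `3t - 6`. -/
theorem upper_envelope_edge_count (G : Finset Plane) (ht : 3 ≤ G.card)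
    (hgen : PlanesGenPos G) :
    {e : Sym2 Plane | ∃ f ∈ G, ∃ g ∈ G, f ≠ g ∧ e = s(f, g) ∧
        ∃ p : ℝ × ℝ, peval f p = peval g p ∧ ∀ h ∈ G, peval h p ≤ peval f p}.ncard
      ≤ 3 * G.card - 6 :=
  upper_envelope_edge_count_general G ht hgen.ncard_face_le_three
end

section
/- There exists a constant C > 0 with the following property. Let H be a set of n ≥ 3 nonvertical planes in ℝ³ in general position, let k ≥ 1 be a real number, and let Q be a finite set of points in ℝ³, none lying on any plane of H, such that every point of Q has level (with respect to H) between k and 2k, and d_H(u, v) ≥ (3/2)k for every two distinct points u, v ∈ Q. Then |Q| ≤ C·n/k. -/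
/-- A point in `ℝ³`. -/
abbrev Pt : Type := ℝ × ℝ × ℝ

open Classical in
/-- The level of a point `u` with respect to a finite set `H` of nonvertical planes: the
number of planes of `H` lying strictly below `u`. -/
noncomputable def level (H : Finset Plane) (u : Pt) : ℕ :=
  (H.filter (fun f => peval f (u.1, u.2.1) < u.2.2)).card

open Classical in
/-- The crossing distance between points `u, v ∈ ℝ³` with respect to a finite set `H` of
nonvertical planes: the number of planes of `H` strictly separating `u` from `v`. -/
noncomputable def cdist (H : Finset Plane) (u v : Pt) : ℕ :=
  (H.filter (fun f =>
    (u.2.2 - peval f (u.1, u.2.1)) * (v.2.2 - peval f (v.1, v.2.1)) < 0)).card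

/-!
Let a *vertex* be the common point of three planes of `H`. Walking from a point `u` first
vertically, then inside the plane reached, then along the line reached, and stopping each time at
one of the `r + 1` nearest planes, one crosses at most `3 * r` planes and reaches at least
`(r + 1) ^ 3 / 6` different vertices. If the points of `Q` have level at most `ℓ`, all these
vertices have level at most `K = ℓ + 3 * r`. If moreover the points of `Q` have pairwise crossing
distance more than `6 * r`, two of them that reach the same vertex lie on different sides of one of
its three planes, so each vertex is reached from at most eight points of `Q`.

It remains to see that only `O(K ^ 2 * n)` vertices have level at most `K`. Fix a generic direction
and a plane `f`, and consider the vertices on which `f` has the middle slope of the three planes.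
Such a vertex is an extreme point, with respect to a linear functional depending only on the
direction, of the part of `f` lying below the two other planes. This extremality makes the pairs
(the two other planes, the planes below the vertex) cross-intersecting, and Tuza's inequality with
`p = 1 / (2 * (K + 1))` leaves at most `8 * (K + 1) ^ 2` of them for each of the two orientations.

Counting incidences gives `|Q| * (r + 1) ^ 3 = O((ℓ + 3 * r) ^ 2 * n)`, and the theorem is the case
where `r + 1` is `k / 4` rounded up and `ℓ = 8 * (r + 1)`.
-/

open Finset

section FinsetLemmas

variable {α : Type*}

theorem lt_card_filter_rank_le {β : Type*} [LinearOrder β] {F : Finset α} (v : α → β) {r : ℕ}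
    (hr : r < #F) : r < #{f ∈ F | #{g ∈ F | v g < v f} ≤ r} := by
  by_cases hall : ∀ f ∈ F, #{g ∈ F | v g < v f} ≤ r
  · rwa [filter_true_of_mem hall]
  · push Not at hall
    obtain ⟨f, hf, hmin⟩ := exists_min_image {f ∈ F | r < #{g ∈ F | v g < v f}} v
      (by simpa [Finset.Nonempty] using hall)
    rw [mem_filter] at hf
    refine hf.2.trans_le (card_le_card fun g hg => ?_)
    rw [mem_filter] at hg ⊢
    refine ⟨hg.1, not_lt.1 fun hrank => ?_⟩
    exact (hmin g (mem_filter.2 ⟨hg.1, hrank⟩)).not_gt hg.2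

theorem mul_card_le_card_mul_of_insert [DecidableEq α] {𝒜 ℬ : Finset (Finset α)} {m j : ℕ}
    (h𝒜 : ∀ S ∈ 𝒜, #S = j) (hℬ : ∀ T ∈ ℬ, #T = j + 1)
    (hext : ∀ S ∈ 𝒜, ∃ E : Finset α, m ≤ #E ∧ ∀ a ∈ E, a ∉ S ∧ insert a S ∈ ℬ) :
    #𝒜 * m ≤ #ℬ * (j + 1) := by
  refine card_mul_le_card_mul (· ⊆ ·) (fun S hS => ?_) (fun T hT => ?_)
  · obtain ⟨E, hmE, hE⟩ := hext S hS
    refine hmE.trans (card_le_card_of_injOn (insert · S) (fun a ha => ?_) fun a ha b _ hab => ?_)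
    · exact mem_coe.2 (mem_filter.2 ⟨(hE a ha).2, subset_insert a S⟩)
    · exact (insert_inj (hE a ha).1).1 hab
  · calc #(bipartiteBelow (· ⊆ ·) 𝒜 T) ≤ #(T.powersetCard j) := card_le_card fun S hS => by
          rw [mem_bipartiteBelow] at hS
          exact mem_powersetCard.2 ⟨hS.2, h𝒜 S hS.1⟩
      _ = j + 1 := by rw [card_powersetCard, hℬ T hT, Nat.choose_succ_self_right]

section SetPairs

variable {R : Type*} [CommSemiring R] {p q : α → R}

theorem sum_cylinder_prod_mul_prod [DecidableEq α] {A B H : Finset α} (hA : A ⊆ H) (hB : B ⊆ H)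
    (hAB : Disjoint A B) (hpq : ∀ a, p a + q a = 1) :
    ∑ S ∈ H.powerset with A ⊆ S ∧ Disjoint B S, (∏ a ∈ S, p a) * ∏ a ∈ H \ S, q a =
      (∏ a ∈ A, p a) * ∏ b ∈ B, q b := by
  -- The left side is the expansion of `∏ a ∈ H, (p a + q a)` with `q` replaced by zero on `A` and
  -- `p` replaced by zero on `B`.
  calc ∑ S ∈ H.powerset with A ⊆ S ∧ Disjoint B S, (∏ a ∈ S, p a) * ∏ a ∈ H \ S, q a
      = ∑ S ∈ H.powerset, (∏ a ∈ S, if a ∉ B then p a else 0) *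
          ∏ a ∈ H \ S, if a ∉ A then q a else 0 := by
        rw [sum_filter]
        refine sum_congr rfl fun S _ => ?_
        have hiff : (A ⊆ S ∧ Disjoint B S) ↔ (∀ a ∈ S, a ∉ B) ∧ ∀ a ∈ H \ S, a ∉ A := by
          rw [and_comm, disjoint_right]
          refine and_congr_right' ⟨fun h a ha haA => (mem_sdiff.1 ha).2 (h haA), fun h a haA => ?_⟩
          exact not_not.1 fun haS => h a (mem_sdiff.2 ⟨hA haA, haS⟩) haA
        rw [prod_ite_zero, prod_ite_zero, ite_zero_mul_ite_zero, if_congr hiff rfl rfl]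
    _ = ∏ a ∈ H, ((if a ∉ B then p a else 0) + if a ∉ A then q a else 0) := (prod_add _ _ H).symm
    _ = ∏ a ∈ H, (if a ∈ A then p a else 1) * if a ∈ B then q a else 1 := by
        refine prod_congr rfl fun a _ => ?_
        by_cases haA : a ∈ A
        · simp [haA, disjoint_left.1 hAB haA]
        · by_cases haB : a ∈ B <;> simp [haA, haB, hpq]
    _ = (∏ a ∈ A, p a) * ∏ b ∈ B, q b := by
        rw [prod_mul_distrib, prod_ite_mem, prod_ite_mem, inter_eq_right.2 hA, inter_eq_right.2 hB]

variable [PartialOrder R] [IsOrderedRing R]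

theorem tuza_inequality {ι : Type*} {I : Finset ι} {A B : ι → Finset α}
    (hp : ∀ a, 0 ≤ p a) (hq : ∀ a, 0 ≤ q a) (hpq : ∀ a, p a + q a = 1)
    (hAB : ∀ i ∈ I, Disjoint (A i) (B i))
    (hcross : (I : Set ι).Pairwise fun i j => ¬(Disjoint (A i) (B j) ∧ Disjoint (A j) (B i))) :
    ∑ i ∈ I, (∏ a ∈ A i, p a) * ∏ b ∈ B i, q b ≤ 1 := by
  classical
  set H := I.biUnion fun i => A i ∪ B i
  have hsub : ∀ i ∈ I, A i ∪ B i ⊆ H := fun i hi => subset_biUnion_of_mem (fun i => A i ∪ B i) hi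
  let cylinder (i : ι) : Finset (Finset α) := {S ∈ H.powerset | A i ⊆ S ∧ Disjoint (B i) S}
  have hdisj : (I : Set ι).PairwiseDisjoint cylinder := fun i hi j hj hij =>
    disjoint_left.2 fun S hSi hSj => by
      simp only [cylinder, mem_filter] at hSi hSj
      exact hcross hi hj hij ⟨(hSj.2.2.mono_right hSi.2.1).symm, (hSi.2.2.mono_right hSj.2.1).symm⟩
  calc ∑ i ∈ I, (∏ a ∈ A i, p a) * ∏ b ∈ B i, q b
      = ∑ i ∈ I, ∑ S ∈ cylinder i, (∏ a ∈ S, p a) * ∏ a ∈ H \ S, q a :=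
        sum_congr rfl fun i hi => (sum_cylinder_prod_mul_prod (union_subset_left (hsub i hi))
          (union_subset_right (hsub i hi)) (hAB i hi) hpq).symm
    _ = ∑ S ∈ I.biUnion cylinder, (∏ a ∈ S, p a) * ∏ a ∈ H \ S, q a := (sum_biUnion hdisj).symm
    _ ≤ ∑ S ∈ H.powerset, (∏ a ∈ S, p a) * ∏ a ∈ H \ S, q a :=
        sum_le_sum_of_subset_of_nonneg (biUnion_subset.2 fun i _ => filter_subset _ _)
          fun S _ _ => mul_nonneg (prod_nonneg fun a _ => hp a) (prod_nonneg fun a _ => hq a)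
    _ = 1 := by rw [← prod_add, prod_congr rfl fun a _ => hpq a, prod_const_one]

end SetPairs

end FinsetLemmas

section Planes

/-- The vertical distance from the plane `g` up to the point `w`, negative if `w` is below `g`. -/
def signedHeight (g : Plane) (w : Pt) : ℝ := w.2.2 - peval g (w.1, w.2.1)

/-- The rate of change of `signedHeight g` along the vector `d`. -/
def heightRate (g : Plane) (d : Pt) : ℝ := d.2.2 - g.1 * d.1 - g.2.1 * d.2.1

/-- The slope of the plane `g` above the direction `(1, s)` of `ℝ²`. -/
def slopeAlong (s : ℝ) (g : Plane) : ℝ := g.1 + s * g.2.1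

/-- Twice the oriented area of the triangle formed by the gradients of three planes. -/
def gradDet (f g h : Plane) : ℝ :=
  (g.1 - f.1) * (h.2.1 - f.2.1) - (g.2.1 - f.2.1) * (h.1 - f.1)

/-- The point `w` lies on every plane of `T`. For three planes of a set in general position this
says that `w` is their vertex. -/
def IsCommonPoint (T : Finset Plane) (w : Pt) : Prop := ∀ g ∈ T, signedHeight g w = 0

variable {H T T' : Finset Plane} {f g h : Plane} {w w' : Pt}

theorem signedHeight_add_smul (g : Plane) (w d : Pt) (t : ℝ) :
    signedHeight g (w + t • d) = signedHeight g w + t * heightRate g d := by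
  simp only [signedHeight, heightRate, peval, Prod.fst_add, Prod.snd_add, Prod.smul_fst,
    Prod.smul_snd, smul_eq_mul]
  ring

theorem level_eq_card_signedHeight_pos (H : Finset Plane) (w : Pt) :
    level H w = #{g ∈ H | 0 < signedHeight g w} := by
  simp only [level, signedHeight, sub_pos]

theorem eq_of_signedHeight_eq_zero (hdet : gradDet f g h ≠ 0)
    (hw : IsCommonPoint {f, g, h} w) (hw' : IsCommonPoint {f, g, h} w') : w = w' := by
  simp only [IsCommonPoint, mem_insert, mem_singleton, forall_eq_or_imp, forall_eq, signedHeight,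
    peval] at hw hw'
  obtain ⟨hf, hg, hh⟩ := hw
  obtain ⟨hf', hg', hh'⟩ := hw'
  unfold gradDet at hdet
  have hx : w.1 = w'.1 := mul_left_cancel₀ hdet <| by
    linear_combination (h.2.1 - f.2.1) * (hf - hg - hf' + hg') -
      (g.2.1 - f.2.1) * (hf - hh - hf' + hh')
  have hy : w.2.1 = w'.2.1 := mul_left_cancel₀ hdet <| by
    linear_combination (g.1 - f.1) * (hf - hh - hf' + hh') -
      (h.1 - f.1) * (hf - hg - hf' + hg')
  have hz : w.2.2 = w'.2.2 := by rw [hx, hy] at hf; linarith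
  exact Prod.ext hx (Prod.ext hy hz)

namespace PlanesGenPos

theorem gradDet_ne_zero (hH : PlanesGenPos H) (hf : f ∈ H) (hg : g ∈ H) (hh : h ∈ H)
    (hfg : f ≠ g) (hfh : f ≠ h) (hgh : g ≠ h) : gradDet f g h ≠ 0 := by
  intro hdet
  obtain ⟨p, ⟨hp₁, hp₂⟩, huniq⟩ := hH.2.1 f hf g hg h hh hfg hfh hgh
  unfold gradDet at hdet
  unfold peval at hp₁ hp₂ huniq
  -- If the gradients are collinear, the three planes still meet after a step across the gradients.
  have hp := huniq (p.1 - (g.2.1 - f.2.1), p.2 + (g.1 - f.1))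
    ⟨by linear_combination hp₁, by linear_combination hp₂ - hdet⟩
  have hfst := congrArg Prod.fst hp
  have hsnd := congrArg Prod.snd hp
  simp only at hfst hsnd
  exact hH.1 f hf g hg hfg (Prod.ext (by simp only; linarith) (by simp only; linarith))

theorem exists_injOn_slopeAlong (hH : PlanesGenPos H) :
    ∃ s : ℝ, Set.InjOn (slopeAlong s) (H : Set Plane) := by
  obtain ⟨s, hs⟩ := Infinite.exists_notMem_finset
    ((H ×ˢ H).image fun x : Plane × Plane => (x.2.1 - x.1.1) / (x.1.2.1 - x.2.2.1))
  refine ⟨s, fun f hf g hg heq => ?_⟩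
  by_contra hfg
  unfold slopeAlong at heq
  by_cases hy : f.2.1 = g.2.1
  · rw [hy, add_left_inj] at heq
    exact hH.1 f hf g hg hfg (Prod.ext heq hy)
  · refine hs (mem_image.2 ⟨(f, g), mem_product.2 ⟨hf, hg⟩, ?_⟩)
    rw [div_eq_iff (sub_ne_zero.2 hy)]
    linarith

theorem mem_of_isCommonPoint (hH : PlanesGenPos H) (hT : T ∈ H.powersetCard 3)
    (hw : IsCommonPoint T w) (hg : g ∈ H) (hgw : signedHeight g w = 0) : g ∈ T := by
  obtain ⟨hTH, hcard⟩ := mem_powersetCard.1 hT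
  obtain ⟨a, b, c, hab, hac, hbc, rfl⟩ := card_eq_three.1 hcard
  simp only [insert_subset_iff, singleton_subset_iff] at hTH
  by_contra hgT
  simp only [mem_insert, mem_singleton, not_or] at hgT
  refine hH.2.2 a hTH.1 b hTH.2.1 c hTH.2.2 g hg hab hac (Ne.symm hgT.1) hbc (Ne.symm hgT.2.1)
    (Ne.symm hgT.2.2) ⟨(w.1, w.2.1), ?_⟩
  simp only [IsCommonPoint, mem_insert, mem_singleton, forall_eq_or_imp, forall_eq, signedHeight,
    sub_eq_zero] at hw hgw
  exact ⟨hw.1.symm.trans hw.2.1, hw.2.1.symm.trans hw.2.2, hw.2.2.symm.trans hgw⟩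

theorem isCommonPoint_unique (hH : PlanesGenPos H) (hT : T ∈ H.powersetCard 3)
    (hw : IsCommonPoint T w) (hw' : IsCommonPoint T w') : w = w' := by
  obtain ⟨hTH, hcard⟩ := mem_powersetCard.1 hT
  obtain ⟨a, b, c, hab, hac, hbc, rfl⟩ := card_eq_three.1 hcard
  simp only [insert_subset_iff, singleton_subset_iff] at hTH
  exact eq_of_signedHeight_eq_zero
    (hH.gradDet_ne_zero hTH.1 hTH.2.1 hTH.2.2 hab hac hbc) hw hw'

theorem eq_of_isCommonPoint (hH : PlanesGenPos H) (hT : T ∈ H.powersetCard 3)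
    (hT' : T' ∈ H.powersetCard 3) (hw : IsCommonPoint T w) (hw' : IsCommonPoint T' w) : T = T' := by
  obtain ⟨hTH, hcard⟩ := mem_powersetCard.1 hT
  refine eq_of_subset_of_card_le (fun g hg => ?_) ?_
  · exact hH.mem_of_isCommonPoint hT' hw' (hTH hg) (hw g hg)
  · rw [(mem_powersetCard.1 hT').2, hcard]

theorem exists_heightRate_eq_zero_iff (hH : PlanesGenPos H) (hTH : T ⊆ H) (hT : #T ≤ 2) :
    ∃ d : Pt, ∀ g ∈ H, heightRate g d = 0 ↔ g ∈ T := by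
  interval_cases hcard : #T
  · rw [card_eq_zero] at hcard
    exact ⟨(0, 0, 1), fun g _ => by simp [heightRate, hcard]⟩
  · obtain ⟨f, rfl⟩ := card_eq_one.1 hcard
    rw [singleton_subset_iff] at hTH
    obtain ⟨s, hs⟩ := hH.exists_injOn_slopeAlong
    refine ⟨(1, s, slopeAlong s f), fun g hg => ?_⟩
    have hrate : heightRate g (1, s, slopeAlong s f) = slopeAlong s f - slopeAlong s g := by
      simp only [heightRate, slopeAlong]
      ring
    rw [hrate, sub_eq_zero, eq_comm, hs.eq_iff hg hTH, mem_singleton]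
  · obtain ⟨f, g, hfg, rfl⟩ := card_eq_two.1 hcard
    simp only [insert_subset_iff, singleton_subset_iff] at hTH
    refine ⟨(f.2.1 - g.2.1, g.1 - f.1, f.1 * (f.2.1 - g.2.1) + f.2.1 * (g.1 - f.1)),
      fun h hh => ?_⟩
    have hrate : heightRate h (f.2.1 - g.2.1, g.1 - f.1,
        f.1 * (f.2.1 - g.2.1) + f.2.1 * (g.1 - f.1)) = -gradDet f g h := by
      simp only [heightRate, gradDet]
      ring
    rw [hrate, neg_eq_zero, mem_insert, mem_singleton]
    constructor
    · contrapose!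
      exact fun hne => hH.gradDet_ne_zero hTH.1 hTH.2 hh hfg hne.1.symm hne.2.symm
    · rintro (rfl | rfl) <;> simp only [gradDet] <;> ring

end PlanesGenPos

end Planes

section Crossings

/-- Going from `u` to `w` one ends strictly on a side of `g` on which one did not start. Starting
on `g` counts as a crossing and ending on `g` does not, which makes `crossings` control the level
of `w` even when `u` lies on planes of `H`. -/
def Crossed (g : Plane) (u w : Pt) : Prop :=
  signedHeight g w ≠ 0 ∧ SignType.sign (signedHeight g u) ≠ SignType.sign (signedHeight g w)

open Classical in
/-- The number of planes of `H` crossed from `u` to `w`; unlike `cdist` it is not symmetric. -/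
noncomputable def crossings (H : Finset Plane) (u w : Pt) : ℕ := #{g ∈ H | Crossed g u w}

variable {H T : Finset Plane} {g : Plane} {u v w d : Pt}

theorem crossings_self (H : Finset Plane) (u : Pt) : crossings H u u = 0 := by
  simp [crossings, Crossed]

theorem crossings_triangle (H : Finset Plane) (u v w : Pt) :
    crossings H u w ≤ crossings H u v + crossings H v w := by
  classical
  refine (card_le_card fun g hg => ?_).trans (card_union_le _ _)
  obtain ⟨hgH, hw, hsign⟩ := mem_filter.1 hg
  by_cases hvw : SignType.sign (signedHeight g v) = SignType.sign (signedHeight g w)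
  · have hv : signedHeight g v ≠ 0 := sign_ne_zero.1 (hvw ▸ sign_ne_zero.2 hw)
    exact mem_union_left _ (mem_filter.2 ⟨hgH, hv, hvw ▸ hsign⟩)
  · exact mem_union_right _ (mem_filter.2 ⟨hgH, hw, hvw⟩)

theorem level_le_level_add_crossings (H : Finset Plane) (u w : Pt) :
    level H w ≤ level H u + crossings H u w := by
  classical
  rw [level_eq_card_signedHeight_pos, level_eq_card_signedHeight_pos]
  refine (card_le_card fun g hg => ?_).trans (card_union_le _ _)
  obtain ⟨hgH, hw⟩ := mem_filter.1 hg
  by_cases hu : 0 < signedHeight g u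
  · exact mem_union_left _ (mem_filter.2 ⟨hgH, hu⟩)
  · refine mem_union_right _ (mem_filter.2 ⟨hgH, hw.ne', ?_⟩)
    rwa [sign_pos hw, Ne, sign_eq_one_iff]

theorem cdist_le_crossings_add_crossings (hH : PlanesGenPos H) (hT : T ∈ H.powersetCard 3)
    (hw : IsCommonPoint T w) (hside : ∀ g ∈ T, 0 < signedHeight g u ↔ 0 < signedHeight g v) :
    cdist H u v ≤ crossings H u w + crossings H v w := by
  classical
  refine (card_le_card fun g hg => ?_).trans (card_union_le _ _)
  obtain ⟨hgH, hsep⟩ := mem_filter.1 hg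
  change signedHeight g u * signedHeight g v < 0 at hsep
  have hgw : signedHeight g w ≠ 0 := fun h0 => by
    have hiff := hside g (hH.mem_of_isCommonPoint hT hw hgH h0)
    rcases mul_neg_iff.1 hsep with ⟨hu, hv⟩ | ⟨hu, hv⟩
    · exact hv.not_gt (hiff.1 hu)
    · exact hu.not_gt (hiff.2 hv)
  have hsign : SignType.sign (signedHeight g u) ≠ SignType.sign (signedHeight g v) := by
    rcases mul_neg_iff.1 hsep with ⟨hu, hv⟩ | ⟨hu, hv⟩ <;> simp [sign_pos, sign_neg, hu, hv]
  by_cases huw : SignType.sign (signedHeight g u) = SignType.sign (signedHeight g w)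
  · exact mem_union_right _ (mem_filter.2 ⟨hgH, hgw, huw ▸ hsign.symm⟩)
  · exact mem_union_left _ (mem_filter.2 ⟨hgH, hgw, huw⟩)

theorem sign_add_eq_of_abs_le {a b : ℝ} (hab : |b| ≤ |a|) (h0 : a + b ≠ 0) :
    SignType.sign (a + b) = SignType.sign a := by
  rcases lt_or_ge 0 a with ha | ha
  · have hpos : 0 < a + b :=
      lt_of_le_of_ne (by linarith [neg_abs_le b, abs_of_pos ha]) h0.symm
    rw [sign_pos hpos, sign_pos ha]
  · have hneg : a + b < 0 :=
      lt_of_le_of_ne (by linarith [le_abs_self b, abs_of_nonpos ha]) h0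
    have ha' : a < 0 := by
      refine lt_of_le_of_ne ha fun ha0 => hneg.ne ?_
      rw [ha0, abs_zero, abs_nonpos_iff] at hab
      rw [ha0, hab, add_zero]
    rw [sign_neg hneg, sign_neg ha']

theorem Crossed.abs_div_lt {t : ℝ} (hg : Crossed g w (w + t • d)) :
    heightRate g d ≠ 0 ∧ |signedHeight g w / heightRate g d| < |t| := by
  rw [Crossed, signedHeight_add_smul] at hg
  have hlt : |signedHeight g w| < |t * heightRate g d| :=
    not_le.1 fun hle => hg.2 (sign_add_eq_of_abs_le hle hg.1).symm
  rw [abs_mul] at hlt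
  have hrate : 0 < |heightRate g d| :=
    pos_of_mul_pos_right (hlt.trans_le' (abs_nonneg _)) (abs_nonneg t)
  exact ⟨abs_pos.1 hrate, by rwa [abs_div, div_lt_iff₀ hrate]⟩

open Classical in
/-- The `j`-element subsets of `H` with a common point reachable from `u` by crossing at most
`j * r` planes of `H`. -/
noncomputable def nearSets (H : Finset Plane) (u : Pt) (r j : ℕ) : Finset (Finset Plane) :=
  {T ∈ H.powersetCard j | ∃ w, IsCommonPoint T w ∧ crossings H u w ≤ j * r}

variable {r j : ℕ}

theorem mem_nearSets : T ∈ nearSets H u r j ↔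
    T ∈ H.powersetCard j ∧ ∃ w, IsCommonPoint T w ∧ crossings H u w ≤ j * r := by
  classical exact mem_filter

theorem exists_insert_mem_nearSets (hH : PlanesGenPos H) (hj : j ≤ 2) (hr : r + j < #H)
    (hT : T ∈ nearSets H u r j) :
    ∃ E : Finset Plane, r + 1 ≤ #E ∧ ∀ f ∈ E, f ∉ T ∧ insert f T ∈ nearSets H u r (j + 1) := by
  classical
  obtain ⟨hTpow, w, hw, hcross⟩ := mem_nearSets.1 hT
  obtain ⟨hTH, hcard⟩ := mem_powersetCard.1 hTpow
  obtain ⟨d, hd⟩ := hH.exists_heightRate_eq_zero_iff hTH (hcard.trans_le hj)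
  let dist (g : Plane) : ℝ := |signedHeight g w / heightRate g d|
  have hrT : r < #(H \ T) := by rw [card_sdiff_of_subset hTH]; omega
  refine ⟨_, lt_card_filter_rank_le dist hrT, fun f hf => ?_⟩
  obtain ⟨hfHT, hrank⟩ := mem_filter.1 hf
  obtain ⟨hfH, hfT⟩ := mem_sdiff.1 hfHT
  set t := -(signedHeight f w / heightRate f d)
  have hcommon : IsCommonPoint (insert f T) (w + t • d) := by
    refine forall_mem_insert .. |>.2 ⟨?_, fun g hg => ?_⟩
    · rw [signedHeight_add_smul, neg_mul, div_mul_cancel₀ _ fun h0 => hfT ((hd f hfH).1 h0),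
        add_neg_cancel]
    · rw [signedHeight_add_smul, (hd g (hTH hg)).2 hg, mul_zero, add_zero, hw g hg]
  have hstep : crossings H w (w + t • d) ≤ r := by
    refine (card_le_card fun g hg => ?_).trans hrank
    obtain ⟨hgH, hgcross⟩ := mem_filter.1 hg
    obtain ⟨hrate, hlt⟩ := hgcross.abs_div_lt
    rw [abs_neg] at hlt
    exact mem_filter.2 ⟨mem_sdiff.2 ⟨hgH, fun hgT => hrate ((hd g hgH).2 hgT)⟩, hlt⟩
  refine ⟨hfT, mem_nearSets.2 ⟨mem_powersetCard.2 ⟨insert_subset hfH hTH, ?_⟩, _, hcommon, ?_⟩⟩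
  · rw [card_insert_of_notMem hfT, hcard]
  · linarith [crossings_triangle H u w (w + t • d)]

theorem card_nearSets_mul_le (hH : PlanesGenPos H) (hj : j ≤ 2) (hr : r + j < #H) :
    #(nearSets H u r j) * (r + 1) ≤ #(nearSets H u r (j + 1)) * (j + 1) :=
  mul_card_le_card_mul_of_insert
    (fun _ hT => (mem_powersetCard.1 (mem_nearSets.1 hT).1).2)
    (fun _ hT => (mem_powersetCard.1 (mem_nearSets.1 hT).1).2)
    fun _ hT => exists_insert_mem_nearSets hH hj hr hT

theorem pow_three_le_card_nearSets (hH : PlanesGenPos H) (hr : r + 2 < #H) (u : Pt) :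
    (r + 1) ^ 3 ≤ 6 * #(nearSets H u r 3) := by
  have h₀ : nearSets H u r 0 = {∅} := by
    rw [nearSets, powersetCard_zero, filter_singleton, if_pos]
    exact ⟨u, by simp [IsCommonPoint], by rw [crossings_self]; omega⟩
  have h₁ := card_nearSets_mul_le (u := u) (j := 0) hH (by omega) (by omega : r + 0 < #H)
  have h₂ := card_nearSets_mul_le (u := u) (j := 1) hH (by omega) (by omega : r + 1 < #H)
  have h₃ := card_nearSets_mul_le (u := u) (j := 2) hH (by omega) hr
  rw [h₀, card_singleton] at h₁
  calc (r + 1) ^ 3 = 1 * (r + 1) * (r + 1) * (r + 1) := by ring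
    _ ≤ #(nearSets H u r 1) * (0 + 1) * (r + 1) * (r + 1) := by gcongr
    _ = #(nearSets H u r 1) * (r + 1) * (r + 1) := by ring
    _ ≤ #(nearSets H u r 2) * (1 + 1) * (r + 1) := by gcongr
    _ = 2 * (#(nearSets H u r 2) * (r + 1)) := by ring
    _ ≤ 2 * (#(nearSets H u r 3) * (2 + 1)) := by gcongr
    _ = 6 * #(nearSets H u r 3) := by ring

end Crossings

section ShallowVertices

/-- The linear functional on `ℝ³` that the vertices with a given middle plane extremize. It is
horizontal and vanishes along the direction `(1, s)` in which slopes are compared. -/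
def sweep (s : ℝ) (w : Pt) : ℝ := s * w.1 - w.2.1

/-- `T` consists of `f`, a plane of smaller slope and a plane of larger slope above the direction
`(1, s)`, and the triangle of their gradients, in this order, has the orientation given by the sign
of `ε`. -/
def IsMiddle (s ε : ℝ) (f : Plane) (T : Finset Plane) : Prop :=
  ∃ g h, T = {f, g, h} ∧ slopeAlong s g < slopeAlong s f ∧ slopeAlong s f < slopeAlong s h ∧
    0 < ε * gradDet f g h

open Classical in
/-- The triples of planes of `H` having a common point of level at most `K`. -/
noncomputable def shallowTriples (H : Finset Plane) (K : ℕ) : Finset (Finset Plane) :=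
  {T ∈ H.powersetCard 3 | ∃ w, IsCommonPoint T w ∧ level H w ≤ K}

variable {H T T' : Finset Plane} {s ε : ℝ} {f g h : Plane} {w w' : Pt} {K : ℕ}

theorem mem_shallowTriples : T ∈ shallowTriples H K ↔
    T ∈ H.powersetCard 3 ∧ ∃ w, IsCommonPoint T w ∧ level H w ≤ K := by
  classical exact mem_filter

theorem IsMiddle.mem (hT : IsMiddle s ε f T) : f ∈ T := by
  obtain ⟨g, h, rfl, -⟩ := hT
  exact mem_insert_self f _

theorem gradDet_mul_sweep_sub (hw : IsCommonPoint {f, g, h} w) (hf : signedHeight f w' = 0) :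
    gradDet f g h * (sweep s w' - sweep s w) =
      (slopeAlong s h - slopeAlong s f) * -signedHeight g w' +
        (slopeAlong s f - slopeAlong s g) * -signedHeight h w' := by
  simp only [IsCommonPoint, mem_insert, mem_singleton, forall_eq_or_imp, forall_eq, signedHeight,
    peval] at hw hf
  obtain ⟨hwf, hwg, hwh⟩ := hw
  simp only [gradDet, sweep, slopeAlong, signedHeight, peval]
  linear_combination (h.1 + s * h.2.1 - (f.1 + s * f.2.1)) * (hf - hwf + hwg) +
    (f.1 + s * f.2.1 - (g.1 + s * g.2.1)) * (hf - hwf + hwh)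

theorem IsMiddle.isCommonPoint_or_sweep_lt (hT : IsMiddle s ε f T) (hw : IsCommonPoint T w)
    (hf : signedHeight f w' = 0) (hbelow : ∀ g ∈ T, signedHeight g w' ≤ 0) :
    IsCommonPoint T w' ∨ ε * sweep s w < ε * sweep s w' := by
  obtain ⟨g, h, rfl, hgf, hfh, hε⟩ := hT
  have hg : signedHeight g w' ≤ 0 := hbelow g (by simp)
  have hh : signedHeight h w' ≤ 0 := hbelow h (by simp)
  have hid := gradDet_mul_sweep_sub (s := s) hw hf
  have hgterm : 0 ≤ (slopeAlong s h - slopeAlong s f) * -signedHeight g w' :=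
    mul_nonneg (by linarith) (by linarith)
  have hhterm : 0 ≤ (slopeAlong s f - slopeAlong s g) * -signedHeight h w' :=
    mul_nonneg (by linarith) (by linarith)
  rcases (add_nonneg hgterm hhterm).eq_or_lt with hzero | hpos
  · obtain ⟨hg0, hh0⟩ := (add_eq_zero_iff_of_nonneg hgterm hhterm).1 hzero.symm
    rw [mul_eq_zero, neg_eq_zero] at hg0 hh0
    left
    simp only [IsCommonPoint, mem_insert, mem_singleton, forall_eq_or_imp, forall_eq]
    exact ⟨hf, hg0.resolve_left (sub_pos.2 hfh).ne', hh0.resolve_left (sub_pos.2 hgf).ne'⟩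
  · right
    rw [← hid] at hpos
    have hprod : 0 < gradDet f g h ^ 2 * (ε * sweep s w' - ε * sweep s w) := by
      linear_combination mul_pos hε hpos
    exact sub_pos.1 (pos_of_mul_pos_right hprod (sq_nonneg _))

theorem IsMiddle.eq_of_below (hH : PlanesGenPos H) (hTH : T ∈ H.powersetCard 3)
    (hTH' : T' ∈ H.powersetCard 3) (hT : IsMiddle s ε f T) (hT' : IsMiddle s ε f T')
    (hw : IsCommonPoint T w) (hw' : IsCommonPoint T' w')
    (hbelow : ∀ g ∈ T, signedHeight g w' ≤ 0) (hbelow' : ∀ g ∈ T', signedHeight g w ≤ 0) :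
    T = T' := by
  rcases hT.isCommonPoint_or_sweep_lt hw (hw' f hT'.mem) hbelow with h | hlt
  · exact hH.eq_of_isCommonPoint hTH hTH' h hw'
  rcases hT'.isCommonPoint_or_sweep_lt hw' (hw f hT.mem) hbelow' with h' | hlt'
  · exact hH.eq_of_isCommonPoint hTH hTH' hw h'
  · exact absurd hlt' hlt.not_gt

theorem one_half_le_one_sub_pow (K : ℕ) : 1 / 2 ≤ (1 - 1 / (2 * (K + 1)) : ℝ) ^ K := by
  have hK : (0 : ℝ) < K + 1 := by positivity
  have hle : 1 / (2 * (K + 1)) ≤ (1 : ℝ) := by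
    rw [div_le_one (by positivity)]
    linarith
  calc (1 / 2 : ℝ) ≤ 1 + K * -(1 / (2 * (K + 1))) := by
        field_simp
        linarith
    _ ≤ (1 + -(1 / (2 * (K + 1)))) ^ K := one_add_mul_le_pow (by linarith) K
    _ = (1 - 1 / (2 * (K + 1))) ^ K := by rw [sub_eq_add_neg]

open Classical in
theorem card_isMiddle_shallow_mul_le_one (hH : PlanesGenPos H) (s ε : ℝ) (f : Plane) (K : ℕ) {p : ℝ}
    (hp0 : 0 ≤ p) (hp1 : p ≤ 1) :
    #{T ∈ shallowTriples H K | IsMiddle s ε f T} * (p ^ 2 * (1 - p) ^ K) ≤ 1 := by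
  set I := {T ∈ shallowTriples H K | IsMiddle s ε f T}
  have hI : ∀ T ∈ I, T ∈ H.powersetCard 3 ∧ IsMiddle s ε f T ∧
      ∃ w, IsCommonPoint T w ∧ level H w ≤ K := fun T hT => by
    obtain ⟨hshallow, hmid⟩ := mem_filter.1 hT
    obtain ⟨hTH, hvertex⟩ := mem_shallowTriples.1 hshallow
    exact ⟨hTH, hmid, hvertex⟩
  choose! hIH hmid w hw hlev using hI
  let below (T : Finset Plane) : Finset Plane := {g ∈ H | 0 < signedHeight g (w T)}
  have hbelow : ∀ T ∈ I, ∀ T' ∈ I, Disjoint (T.erase f) (below T') →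
      ∀ g ∈ T, signedHeight g (w T') ≤ 0 := fun T hT T' hT' hdisj g hg => by
    rcases eq_or_ne g f with rfl | hgf
    · exact (hw T' hT' g (hmid T' hT').mem).le
    · exact not_lt.1 fun hpos => disjoint_left.1 hdisj (mem_erase.2 ⟨hgf, hg⟩)
        (mem_filter.2 ⟨(mem_powersetCard.1 (hIH T hT)).1 hg, hpos⟩)
  have htuza := tuza_inequality (I := I) (A := fun T => T.erase f) (B := below)
    (p := fun _ => p) (q := fun _ => 1 - p) (fun _ => hp0) (fun _ => sub_nonneg.2 hp1)
    (fun _ => add_sub_cancel p 1)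
    (fun T hT => disjoint_left.2 fun g hg hgw =>
      (mem_filter.1 hgw).2.ne' (hw T hT g (mem_of_mem_erase hg)))
    (fun T hT T' hT' hne hdisj => hne <| (hmid T hT).eq_of_below hH (hIH T hT) (hIH T' hT')
      (hmid T' hT') (hw T hT) (hw T' hT') (hbelow T hT T' hT' hdisj.1)
      (hbelow T' hT' T hT hdisj.2))
  refine le_trans ?_ htuza
  rw [← nsmul_eq_mul]
  refine card_nsmul_le_sum _ _ _ fun T hT => ?_
  have hcard : #(T.erase f) = 2 := by
    rw [card_erase_of_mem (hmid T hT).mem, (mem_powersetCard.1 (hIH T hT)).2]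
  rw [prod_const, prod_const, hcard]
  gcongr ?_ * ?_
  have hle : #(below T) ≤ K := level_eq_card_signedHeight_pos H (w T) ▸ hlev T hT
  exact pow_le_pow_of_le_one (by linarith) (by linarith) hle

open Classical in
theorem card_isMiddle_shallow_le (hH : PlanesGenPos H) (s ε : ℝ) (f : Plane) (K : ℕ) :
    #{T ∈ shallowTriples H K | IsMiddle s ε f T} ≤ 8 * (K + 1) ^ 2 := by
  set n := #{T ∈ shallowTriples H K | IsMiddle s ε f T}
  have hp1 : 1 / (2 * (K + 1)) ≤ (1 : ℝ) := by
    rw [div_le_one (by positivity)]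
    linarith [K.cast_nonneg (α := ℝ)]
  have hbound : (n : ℝ) / (8 * (K + 1) ^ 2) ≤ 1 :=
    calc (n : ℝ) / (8 * (K + 1 : ℝ) ^ 2)
        = n * ((1 / (2 * (K + 1 : ℝ))) ^ 2 * (1 / 2)) := by
          field_simp
          ring
      _ ≤ n * ((1 / (2 * (K + 1 : ℝ))) ^ 2 * (1 - 1 / (2 * (K + 1 : ℝ))) ^ K) := by
          gcongr
          exact one_half_le_one_sub_pow K
      _ ≤ 1 := card_isMiddle_shallow_mul_le_one hH s ε f K (by positivity) hp1
  rw [div_le_one (by positivity)] at hbound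
  exact_mod_cast hbound

theorem exists_isMiddle (hH : PlanesGenPos H) (hs : Set.InjOn (slopeAlong s) (H : Set Plane))
    (hT : T ∈ H.powersetCard 3) : ∃ f ∈ H, ∃ ε ∈ ({1, -1} : Finset ℝ), IsMiddle s ε f T := by
  obtain ⟨hTH, hcard⟩ := mem_powersetCard.1 hT
  obtain ⟨g, hg, hmin⟩ := exists_min_image T (slopeAlong s) (card_pos.1 (by omega))
  obtain ⟨h, hh, hmax⟩ := exists_max_image (T.erase g) (slopeAlong s)
    (card_pos.1 (by rw [card_erase_of_mem hg]; omega))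
  obtain ⟨f, hf⟩ : ∃ f, (T.erase g).erase h = {f} :=
    card_eq_one.1 (by rw [card_erase_of_mem hh, card_erase_of_mem hg, hcard])
  obtain ⟨hfh, hfg'⟩ := mem_erase.1 (hf ▸ mem_singleton_self f : f ∈ (T.erase g).erase h)
  obtain ⟨hfg, hfT⟩ := mem_erase.1 hfg'
  obtain ⟨hhg, hhT⟩ := mem_erase.1 hh
  have hTeq : T = {f, g, h} := by
    rw [← insert_erase hg, ← insert_erase hh, hf]
    ext x
    simp only [mem_insert, mem_singleton]
    tauto
  have hgf : slopeAlong s g < slopeAlong s f :=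
    lt_of_le_of_ne (hmin f hfT) fun h => hfg (hs (hTH hfT) (hTH hg) h.symm)
  have hfh' : slopeAlong s f < slopeAlong s h :=
    lt_of_le_of_ne (hmax f hfg') fun h => hfh (hs (hTH hfT) (hTH hhT) h)
  refine ⟨f, hTH hfT, ?_⟩
  have hdet := hH.gradDet_ne_zero (hTH hfT) (hTH hg) (hTH hhT) hfg hfh hhg.symm
  rcases hdet.lt_or_gt with hneg | hpos
  · exact ⟨-1, by simp, g, h, hTeq, hgf, hfh', by linarith⟩
  · exact ⟨1, by simp, g, h, hTeq, hgf, hfh', by linarith⟩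

theorem card_shallowTriples_le (hH : PlanesGenPos H) (K : ℕ) :
    #(shallowTriples H K) ≤ 16 * (K + 1) ^ 2 * #H := by
  classical
  obtain ⟨s, hs⟩ := hH.exists_injOn_slopeAlong
  let cls (x : Plane × ℝ) : Finset (Finset Plane) :=
    {T ∈ shallowTriples H K | IsMiddle s x.2 x.1 T}
  have hcover : shallowTriples H K ⊆ (H ×ˢ {1, -1}).biUnion cls := fun T hT => by
    obtain ⟨f, hf, ε, hε, hmid⟩ := exists_isMiddle hH hs (mem_shallowTriples.1 hT).1
    exact mem_biUnion.2 ⟨(f, ε), mem_product.2 ⟨hf, hε⟩, mem_filter.2 ⟨hT, hmid⟩⟩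
  calc #(shallowTriples H K) ≤ #((H ×ˢ {1, -1}).biUnion cls) := card_le_card hcover
    _ ≤ #(H ×ˢ ({1, -1} : Finset ℝ)) * (8 * (K + 1) ^ 2) :=
        card_biUnion_le_card_mul _ _ _ fun x _ => card_isMiddle_shallow_le hH s x.2 x.1 K
    _ ≤ #H * 2 * (8 * (K + 1) ^ 2) := by
        rw [card_product]
        gcongr
        exact card_le_two
    _ = 16 * (K + 1) ^ 2 * #H := by ring

end ShallowVertices

section Packing

variable {H T : Finset Plane} {Q : Finset Pt} {r ℓ : ℕ}

theorem nearSets_subset_shallowTriples {u : Pt} (hu : level H u ≤ ℓ) :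
    nearSets H u r 3 ⊆ shallowTriples H (ℓ + 3 * r) := fun _ hT => by
  obtain ⟨hTH, w, hw, hcross⟩ := mem_nearSets.1 hT
  exact mem_shallowTriples.2
    ⟨hTH, w, hw, (level_le_level_add_crossings H u w).trans (add_le_add hu hcross)⟩

theorem card_filter_mem_nearSets_le (hH : PlanesGenPos H)
    (hsep : ∀ u ∈ Q, ∀ v ∈ Q, u ≠ v → 6 * r < cdist H u v) (hT : T ∈ H.powersetCard 3) :
    #{u ∈ Q | T ∈ nearSets H u r 3} ≤ 8 := by
  have hpow : #T.powerset = 8 := by rw [card_powerset, (mem_powersetCard.1 hT).2]; rfl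
  rw [← hpow]
  refine card_le_card_of_injOn (fun u => {g ∈ T | 0 < signedHeight g u})
    (fun u _ => mem_coe.2 (mem_powerset.2 (filter_subset _ T))) fun u hu v hv huv => ?_
  obtain ⟨huQ, hTu⟩ := mem_filter.1 hu
  obtain ⟨hvQ, hTv⟩ := mem_filter.1 hv
  obtain ⟨-, w, hw, huw⟩ := mem_nearSets.1 hTu
  obtain ⟨-, w', hw', hvw⟩ := mem_nearSets.1 hTv
  obtain rfl := hH.isCommonPoint_unique hT hw hw'
  by_contra hne
  have hdist := cdist_le_crossings_add_crossings hH hT hw (filter_inj'.1 huv)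
  have := hsep u huQ v hvQ hne
  omega

theorem card_mul_pow_three_le_of_level_le (hH : PlanesGenPos H) (hr : r + 2 < #H)
    (hlev : ∀ u ∈ Q, level H u ≤ ℓ)
    (hsep : ∀ u ∈ Q, ∀ v ∈ Q, u ≠ v → 6 * r < cdist H u v) :
    #Q * (r + 1) ^ 3 ≤ 768 * (ℓ + 3 * r + 1) ^ 2 * #H := by
  set S := shallowTriples H (ℓ + 3 * r)
  calc #Q * (r + 1) ^ 3 = ∑ u ∈ Q, (r + 1) ^ 3 := by rw [sum_const, smul_eq_mul]
    _ ≤ ∑ u ∈ Q, 6 * #(nearSets H u r 3) :=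
        sum_le_sum fun u _ => pow_three_le_card_nearSets hH hr u
    _ = 6 * ∑ u ∈ Q, #{T ∈ S | T ∈ nearSets H u r 3} := by
        rw [mul_sum]
        refine sum_congr rfl fun u hu => ?_
        rw [filter_mem_eq_inter, inter_eq_right.2 (nearSets_subset_shallowTriples (hlev u hu))]
    _ = 6 * ∑ T ∈ S, #{u ∈ Q | T ∈ nearSets H u r 3} :=
        congrArg (6 * ·) <|
          sum_card_bipartiteAbove_eq_sum_card_bipartiteBelow fun u T => T ∈ nearSets H u r 3
    _ ≤ 6 * ∑ T ∈ S, 8 := by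
        gcongr with T hT
        exact card_filter_mem_nearSets_le hH hsep (mem_shallowTriples.1 hT).1
    _ = 48 * #S := by rw [sum_const, smul_eq_mul]; ring
    _ ≤ 48 * (16 * (ℓ + 3 * r + 1) ^ 2 * #H) := by
        gcongr
        exact card_shallowTriples_le hH _
    _ = 768 * (ℓ + 3 * r + 1) ^ 2 * #H := by ring

theorem packing_bound_general (hn : 3 ≤ #H) (hH : PlanesGenPos H) {k : ℝ} (hk : 0 < k)
    (hkn : k ≤ #H) (hlev : ∀ q ∈ Q, (level H q : ℝ) ≤ 2 * k)
    (hsep : ∀ u ∈ Q, ∀ v ∈ Q, u ≠ v → 3 / 2 * k ≤ (cdist H u v : ℝ)) :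
    (#Q : ℝ) ≤ 371712 * #H / k := by
  obtain ⟨r, hr⟩ : ∃ r, ⌈k / 4⌉₊ = r + 1 :=
    Nat.exists_eq_succ_of_ne_zero (Nat.ceil_pos.2 (by positivity)).ne'
  have hr_lower : k / 4 ≤ r + 1 := by exact_mod_cast hr ▸ Nat.le_ceil (k / 4)
  have hr_upper : (r : ℝ) < k / 4 := Nat.lt_ceil.1 (by omega)
  have hrn : r + 2 < #H := by
    have hlt : (4 * r : ℝ) < #H := by linarith
    have hlt' : 4 * r < #H := by exact_mod_cast hlt
    omega
  have hlev' : ∀ q ∈ Q, level H q ≤ 8 * (r + 1) := fun q hq => by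
    have hle : (level H q : ℝ) ≤ 8 * (r + 1) := by linarith [hlev q hq]
    exact_mod_cast hle
  have hsep' : ∀ u ∈ Q, ∀ v ∈ Q, u ≠ v → 6 * r < cdist H u v := fun u hu v hv huv => by
    have hlt : (6 * r : ℝ) < cdist H u v := by linarith [hsep u hu v hv huv]
    exact_mod_cast hlt
  have hpack : (#Q * (r + 1)) * (r + 1) ^ 2 ≤ (92928 * #H) * (r + 1) ^ 2 :=
    calc (#Q * (r + 1)) * (r + 1) ^ 2 = #Q * (r + 1) ^ 3 := by ring
      _ ≤ 768 * (8 * (r + 1) + 3 * r + 1) ^ 2 * #H :=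
          card_mul_pow_three_le_of_level_le hH hrn hlev' hsep'
      _ ≤ 768 * (11 * (r + 1)) ^ 2 * #H := by
          gcongr
          omega
      _ = (92928 * #H) * (r + 1) ^ 2 := by ring
  have hpack' : (#Q * (r + 1) : ℝ) ≤ 92928 * #H := by
    exact_mod_cast le_of_mul_le_mul_right hpack (by positivity)
  rw [le_div_iff₀ hk]
  calc (#Q * k : ℝ) = 4 * (#Q * (k / 4)) := by ring
    _ ≤ 4 * (#Q * (r + 1)) := by gcongr
    _ ≤ 4 * (92928 * #H) := by gcongr
    _ = 371712 * #H := by ring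

end Packing

/-- There is a constant `C > 0` such that: for any set `H` of `n ≥ 3` nonvertical planes in
general position, any real `k ≥ 1`, and any finite set `Q` of points avoiding all planes of
`H`, each at level between `k` and `2k`, with pairwise crossing distances at least `(3/2)k`,
one has `|Q| ≤ C·n/k`. -/
theorem packing_bound :
    ∃ C : ℝ, 0 < C ∧
      ∀ H : Finset Plane, 3 ≤ H.card → PlanesGenPos H →
        ∀ k : ℝ, 1 ≤ k →
          ∀ Q : Finset Pt,
            (∀ q ∈ Q, ∀ f ∈ H, peval f (q.1, q.2.1) ≠ q.2.2) →
            (∀ q ∈ Q, k ≤ (level H q : ℝ) ∧ (level H q : ℝ) ≤ 2 * k) →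
            (∀ u ∈ Q, ∀ v ∈ Q, u ≠ v → (3 / 2) * k ≤ (cdist H u v : ℝ)) →
            (Q.card : ℝ) ≤ C * (H.card : ℝ) / k := by
  refine ⟨371712, by norm_num, fun H hn hH k hk Q _ hlev hsep => ?_⟩
  rcases Q.eq_empty_or_nonempty with rfl | ⟨q, hq⟩
  · rw [Finset.card_empty, Nat.cast_zero]
    positivity
  · have hkn : k ≤ H.card := (hlev q hq).1.trans (mod_cast Finset.card_filter_le _ _)
    exact packing_bound_general hn hH (by linarith) hkn (fun q hq => (hlev q hq).2) hsep
end
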